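/- For a real number u and a natural number j, define f_j^u(x) = \frac{(-1)^j}{j!} \prod_{i=0}^{j-1} (x - i(u+i)). For real \alpha, c, N, define the normalized dual Hahn polynomials h^{*,\alpha,c,N}_n(x) = \frac{1}{n!} \sum_{j=0}^n (-n)_j (1-N+j)_{n-j} (c+j)_{n-j} \, f_j^{\alpha+c-N}(x), the quadratic map \lambda^{\alpha,c,N}(x) = x(x+\alpha+c-N), and the normalized Casorati dual Hahn determinant H^{*,\alpha,c,N}_{n,m,x} = \det\big( h^{*,\alpha,c,N}_{m+j-1}(\lambda^{\alpha,c,N}(x+i-1)) \big)_{i,j=1}^n \big/ \prod_{l=1}^{n-1} (2x+\alpha+c-N+l)_l. Let n, m be natural numbers and x, \alpha, c, N real numbers such that \prod_{l=1}^{n-1} (2x+\alpha+c-N-n-m+l)_l \ne 0 and \prod_{l=1}^{m-1} (-2x+2-(\alpha+c-N)+l)_l \ne 0. Then: H^{*, \, \alpha+n+m, \, c-n-m, \, N+n+m}_{n,m,x} = H^{*, \, -\alpha, \, 2-c, \, -N}_{m,n,-x}. -/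

import Mathlib

/-- The Pochhammer symbol `(y)_l = y (y+1) ⋯ (y+l-1)`. -/
noncomputable def poch (y : ℝ) (l : ℕ) : ℝ := ∏ k ∈ Finset.range l, (y + k)

/-- The polynomial `f_j^u(x) = ((-1)^j/j!) ∏_{i=0}^{j-1} (x - i(u+i))`. -/
noncomputable def fpol (u : ℝ) (j : ℕ) (x : ℝ) : ℝ :=
  ((-1 : ℝ) ^ j / j.factorial) * ∏ i ∈ Finset.range j, (x - i * (u + i))

/-- The normalized dual Hahn polynomial
`h^{*,α,c,N}_n(x) = (1/n!) ∑_{j=0}^n (-n)_j (1-N+j)_{n-j} (c+j)_{n-j} f_j^{α+c-N}(x)`. -/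
noncomputable def dualHahn (α c N : ℝ) (n : ℕ) (x : ℝ) : ℝ :=
  (1 / n.factorial) * ∑ j ∈ Finset.range (n + 1),
    poch (-(n : ℝ)) j * poch (1 - N + j) (n - j) * poch (c + j) (n - j) *
      fpol (α + c - N) j x

/-- The normalized Casorati dual Hahn determinant `H^{*,α,c,N}_{n,m,x}`. -/
noncomputable def dualHahnCasorati (α c N : ℝ) (n m : ℕ) (x : ℝ) : ℝ :=
  Matrix.det (Matrix.of fun i j : Fin n =>
    dualHahn α c N (m + (j : ℕ)) ((x + (i : ℕ)) * (x + (i : ℕ) + α + c - N))) /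
  ∏ l ∈ Finset.Icc 1 (n - 1), poch (2 * x + α + c - N + l) l

theorem poch_add (y : ℝ) (p q : ℕ) : poch y (p + q) = poch y p * poch (y + p) q := by
  unfold poch
  rw [Finset.prod_range_add]
  congr 1
  apply Finset.prod_congr rfl
  intro k _
  push_cast; ring

theorem poch_succ (y : ℝ) (p : ℕ) : poch y (p + 1) = poch y p * (y + p) := by
  unfold poch
  rw [Finset.prod_range_succ]

theorem poch_succ' (y : ℝ) (p : ℕ) : poch y (p + 1) = y * poch (y + 1) p := by
  rw [add_comm, poch_add]; simp [poch]

theorem poch_zero (y : ℝ) : poch y 0 = 1 := by simp [poch]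

theorem poch_refl (y : ℝ) (q : ℕ) : poch y q = (-1) ^ q * poch (1 - y - q) q := by
  induction q generalizing y with
  | zero => simp [poch]
  | succ q ih =>
    rw [poch_succ', ih (y + 1), poch_succ]
    have : (1 - (y + 1) - (q : ℝ)) = 1 - y - ((q + 1 : ℕ) : ℝ) := by push_cast; ring
    rw [this]
    push_cast; ring

theorem poch_neg (p j : ℕ) : poch (-((p + j : ℕ) : ℝ)) j * p.factorial = (-1) ^ j * (p + j).factorial := by
  induction j with
  | zero => simp [poch]
  | succ j ih =>
    rw [poch_succ']
    have : (-((p + (j + 1) : ℕ) : ℝ)) + 1 = -((p + j : ℕ) : ℝ) := by push_cast; ring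
    rw [this, mul_assoc, ih, ← add_assoc, Nat.factorial_succ]
    push_cast; ring

/-- coefficients -/
noncomputable def ecoef (c N : ℝ) (k j : ℕ) : ℝ :=
  if j ≤ k then (-1) ^ j / (k - j).factorial * poch (1 - N + j) (k - j) * poch (c + j) (k - j) else 0

theorem dualHahn_expand (α c N : ℝ) (k d : ℕ) (h : k ≤ d) (X : ℝ) :
    dualHahn α c N k X = ∑ j ∈ Finset.range (d + 1), ecoef c N k j * fpol (α + c - N) j X := by
  have h2 : ∑ j ∈ Finset.range (d + 1), ecoef c N k j * fpol (α + c - N) j X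
      = ∑ j ∈ Finset.range (k + 1), ecoef c N k j * fpol (α + c - N) j X := by
    symm
    apply Finset.sum_subset
    · intro a; simp only [Finset.mem_range]; omega
    · intro a _ ha
      simp only [Finset.mem_range] at ha
      rw [ecoef, if_neg (by omega)]; simp
  rw [h2, dualHahn, Finset.mul_sum]
  apply Finset.sum_congr rfl
  intro j hj
  have hj' : j ≤ k := by simp only [Finset.mem_range] at hj; omega
  rw [ecoef, if_pos hj']
  obtain ⟨p, rfl⟩ := Nat.exists_eq_add_of_le' hj'
  have := poch_neg p j
  rw [Nat.add_sub_cancel]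
  have h3 : (p.factorial : ℝ) ≠ 0 := by positivity
  have h4 : ((p + j).factorial : ℝ) ≠ 0 := by positivity
  have h5 : poch (-((p + j : ℕ) : ℝ)) j = (-1) ^ j * (p + j).factorial / p.factorial := by
    rw [eq_div_iff h3, this]
  rw [h5]
  field_simp

theorem alt_fact (r : ℕ) :
    ∑ p ∈ Finset.range (r + 1), (-1 : ℝ) ^ p / (p.factorial * (r - p).factorial) = if r = 0 then 1 else 0 := by
  have h := Int.alternating_sum_range_choose (n := r)
  have h' : ∑ p ∈ Finset.range (r + 1), (-1 : ℝ) ^ p * (r.choose p : ℝ) = if r = 0 then 1 else 0 := by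
    exact_mod_cast h
  have : ∑ p ∈ Finset.range (r + 1), (-1 : ℝ) ^ p / (p.factorial * (r - p).factorial)
      = (∑ p ∈ Finset.range (r + 1), (-1 : ℝ) ^ p * (r.choose p : ℝ)) / r.factorial := by
    rw [Finset.sum_div]
    apply Finset.sum_congr rfl
    intro p hp
    rw [Nat.cast_choose ℝ (by simp only [Finset.mem_range] at hp; omega)]
    have : (r.factorial : ℝ) ≠ 0 := by positivity
    field_simp
  rw [this, h']
  split_ifs with h0
  · simp [h0]
  · simp

theorem inner_coef_sum (c N : ℝ) (d i j : ℕ) :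
    ∑ k ∈ Finset.range (d + 1), (-1 : ℝ) ^ k * ecoef c N k j * ecoef (1 - c - d) (1 + d - N) (d - k) i
      = if i + j = d then (-1) ^ i else 0 := by
  by_cases hd : i + j ≤ d
  · obtain ⟨r, rfl⟩ := Nat.exists_eq_add_of_le hd
    have h1 : ∑ k ∈ Finset.range (i + j + r + 1), (-1 : ℝ) ^ k * ecoef c N k j *
        ecoef (1 - c - (i + j + r : ℕ)) (1 + (i + j + r : ℕ) - N) (i + j + r - k) i
        = ∑ p ∈ Finset.range (r + 1), (-1 : ℝ) ^ (j + p) * ecoef c N (j + p) j *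
        ecoef (1 - c - (i + j + r : ℕ)) (1 + (i + j + r : ℕ) - N) (i + j + r - (j + p)) i := by
      symm
      rw [← Finset.sum_image (s := Finset.range (r + 1)) (g := fun p => j + p)
        (f := fun k => (-1 : ℝ) ^ k * ecoef c N k j *
        ecoef (1 - c - (i + j + r : ℕ)) (1 + (i + j + r : ℕ) - N) (i + j + r - k) i)
        (by intro a _ b _ h; simpa using h)]
      apply Finset.sum_subset
      · intro a
        simp only [Finset.mem_image, Finset.mem_range]
        rintro ⟨b, hb, rfl⟩; omega
      · intro a ha hb
        simp only [Finset.mem_image, Finset.mem_range, not_exists, not_and] at ha hb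
        by_cases hja : j ≤ a
        · have : ¬ i ≤ i + j + r - a := by
            intro h
            exact hb (a - j) (by omega) (by omega)
          rw [ecoef.eq_def (1 - c - _), if_neg this, mul_zero]
        · rw [ecoef, if_neg hja]; simp
    rw [h1]
    have h2 : ∀ p ∈ Finset.range (r + 1), (-1 : ℝ) ^ (j + p) * ecoef c N (j + p) j *
        ecoef (1 - c - (i + j + r : ℕ)) (1 + (i + j + r : ℕ) - N) (i + j + r - (j + p)) i
        = ((-1) ^ i * poch (1 - N + j) r * poch (c + j) r) *
          ((-1 : ℝ) ^ p / (p.factorial * (r - p).factorial)) := by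
      intro p hp
      simp only [Finset.mem_range] at hp
      obtain ⟨q, rfl⟩ := Nat.exists_eq_add_of_le (show p ≤ r by omega)
      have e1 : i + j + (p + q) - (j + p) = i + q := by omega
      rw [e1, ecoef, ecoef, if_pos (by omega), if_pos (by omega)]
      rw [Nat.add_sub_cancel_left, Nat.add_sub_cancel_left, Nat.add_sub_cancel_left,
        poch_add _ p q, poch_add _ p q, poch_refl _ q, poch_refl (1 - c - _ + _) q]
      have e2 : 1 - (1 - (1 + ((i + j + (p + q) : ℕ) : ℝ) - N) + i) - q = 1 - N + j + p := by
        push_cast; ring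
      have e3 : 1 - (1 - c - ((i + j + (p + q) : ℕ) : ℝ) + i) - q = c + j + p := by
        push_cast; ring
      rw [e2, e3, pow_add]
      have s1 : ((-1 : ℝ) ^ j) * (-1) ^ j = 1 := by rw [← mul_pow]; simp
      have s2 : ((-1 : ℝ) ^ q) * (-1) ^ q = 1 := by rw [← mul_pow]; simp
      generalize (-1 : ℝ) ^ j = sj at *
      generalize (-1 : ℝ) ^ q = sq at *
      generalize poch (1 - N + j) p = a1
      generalize poch (1 - N + j + p) q = a2
      generalize poch (c + j) p = a3
      generalize poch (c + j + p) q = a4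
      have h3 : (p.factorial : ℝ) ≠ 0 := by positivity
      have h4 : (q.factorial : ℝ) ≠ 0 := by positivity
      field_simp
      linear_combination (a1 * a2 * a3 * a4) * (sj ^ 2 * s2 + s1)
    rw [Finset.sum_congr rfl h2, ← Finset.mul_sum, alt_fact]
    by_cases hr : r = 0
    · subst hr; simp [poch_zero]
    · rw [if_neg hr, if_neg (by omega), mul_zero]
  · rw [if_neg (by omega)]
    apply Finset.sum_eq_zero
    intro k hk
    simp only [Finset.mem_range] at hk
    by_cases hja : j ≤ k
    · rw [ecoef.eq_def (1 - c - _), if_neg (by omega), mul_zero]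
    · rw [ecoef, if_neg hja]; simp

theorem fpol_fact (u y : ℝ) (j : ℕ) :
    fpol u j (y * (y + u)) = poch (-y) j * poch (y + u) j / j.factorial := by
  unfold fpol poch
  rw [← Finset.prod_mul_distrib, div_mul_eq_mul_div]
  congr 1
  have : ((-1 : ℝ)) ^ j = ∏ i ∈ Finset.range j, (-1 : ℝ) := by simp
  rw [this, ← Finset.prod_mul_distrib]
  apply Finset.prod_congr rfl
  intro i _
  ring

theorem vand (a b : ℝ) (d : ℕ) :
    ∑ j ∈ Finset.range (d + 1), (d.choose j : ℝ) * (poch a j * poch b (d - j)) = poch (a + b) d := by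
  induction d generalizing a b with
  | zero => simp [poch]
  | succ d ih =>
    rw [Finset.sum_range_succ']
    have : ∀ j ∈ Finset.range (d + 1), ((d + 1).choose (j + 1) : ℝ) * (poch a (j + 1) * poch b (d + 1 - (j + 1)))
       = a * ((d.choose j : ℝ) * (poch (a + 1) j * poch b (d - j))) +
         (d.choose (j + 1) : ℝ) * (poch a (j + 1) * poch b (d - j)) := by
      intro j _
      rw [Nat.choose_succ_succ, Nat.add_sub_add_right]
      push_cast
      rw [poch_succ' a]; ring
    rw [Finset.sum_congr rfl this, Finset.sum_add_distrib, ← Finset.mul_sum, ih]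
    have h2 : ∑ j ∈ Finset.range (d + 1), (d.choose (j + 1) : ℝ) * (poch a (j + 1) * poch b (d - j))
        + ((d + 1).choose 0 : ℝ) * (poch a 0 * poch b (d + 1 - 0))
        = ∑ j ∈ Finset.range (d + 1), (d.choose j : ℝ) * (poch a j * poch b (d + 1 - j)) := by
      rw [Finset.sum_range_succ, Finset.sum_range_succ' (n := d)]
      simp only [Nat.choose_succ_self, Nat.choose_zero_right]
      simp only [Nat.cast_zero, zero_mul, add_zero, Nat.add_sub_add_right]
    rw [add_assoc, h2]
    have h3 : ∀ j ∈ Finset.range (d + 1), (d.choose j : ℝ) * (poch a j * poch b (d + 1 - j))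
        = b * ((d.choose j : ℝ) * (poch a j * poch (b + 1) (d - j))) := by
      intro j hj
      simp only [Finset.mem_range] at hj
      rw [show d + 1 - j = (d - j) + 1 by omega, poch_succ']; ring
    rw [Finset.sum_congr rfl h3, ← Finset.mul_sum, ih, poch_succ']
    rw [show a + 1 + b = a + b + 1 by ring, show a + (b + 1) = a + b + 1 by ring]
    ring

theorem core (α c N x : ℝ) (d : ℕ) :
    ∑ k ∈ Finset.range (d + 1), (-1 : ℝ) ^ k * dualHahn α c N k (x * (x + (α + c - N))) *
      dualHahn (1 + d - α) (1 - c - d) (1 + d - N) (d - k) (-x * (-x + (1 - d - (α + c - N))))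
      = if d = 0 then 1 else 0 := by
  have h1 : ∀ k ∈ Finset.range (d + 1), (-1 : ℝ) ^ k * dualHahn α c N k (x * (x + (α + c - N))) *
      dualHahn (1 + d - α) (1 - c - d) (1 + d - N) (d - k) (-x * (-x + (1 - d - (α + c - N))))
      = ∑ j ∈ Finset.range (d + 1), ∑ i ∈ Finset.range (d + 1),
        ((-1 : ℝ) ^ k * ecoef c N k j * ecoef (1 - c - d) (1 + d - N) (d - k) i) *
        (fpol (α + c - N) j (x * (x + (α + c - N))) *
          fpol (1 - d - (α + c - N)) i (-x * (-x + (1 - d - (α + c - N))))) := by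
    intro k hk
    simp only [Finset.mem_range] at hk
    rw [dualHahn_expand α c N k d (by omega), dualHahn_expand _ _ _ (d - k) d (by omega),
      show 1 + (d : ℝ) - α + (1 - c - d) - (1 + d - N) = 1 - d - (α + c - N) by ring,
      mul_assoc, Finset.sum_mul_sum, Finset.mul_sum]
    apply Finset.sum_congr rfl; intro j _
    rw [Finset.mul_sum]
    apply Finset.sum_congr rfl; intro i _
    ring
  rw [Finset.sum_congr rfl h1, Finset.sum_comm]
  have h2 : ∀ j ∈ Finset.range (d + 1), ∑ k ∈ Finset.range (d + 1), ∑ i ∈ Finset.range (d + 1),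
        ((-1 : ℝ) ^ k * ecoef c N k j * ecoef (1 - c - d) (1 + d - N) (d - k) i) *
        (fpol (α + c - N) j (x * (x + (α + c - N))) *
          fpol (1 - d - (α + c - N)) i (-x * (-x + (1 - d - (α + c - N)))))
      = (poch (x + (α + c - N)) d / d.factorial) * ((d.choose j : ℝ) * (poch (-x) j * poch x (d - j))) := by
    intro j hj
    simp only [Finset.mem_range] at hj
    rw [Finset.sum_comm]
    simp only [← Finset.sum_mul, inner_coef_sum]
    rw [Finset.sum_eq_single (d - j)]
    · rw [if_pos (by omega), fpol_fact, fpol_fact, neg_neg, poch_refl (-x + _),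
        Nat.cast_choose ℝ (show j ≤ d by omega)]
      rw [show poch (x + (α + c - N)) d = poch (x + (α + c - N)) (j + (d - j)) by
        rw [show j + (d - j) = d by omega], poch_add]
      rw [show 1 - (-x + (1 - (d : ℝ) - (α + c - N))) - ((d - j : ℕ) : ℝ) = x + (α + c - N) + j by
        rw [Nat.cast_sub (by omega)]; ring]
      have s2 : ((-1 : ℝ) ^ (d - j)) * (-1) ^ (d - j) = 1 := by rw [← mul_pow]; simp
      generalize (-1 : ℝ) ^ (d - j) = sq at *
      have h3 : (j.factorial : ℝ) ≠ 0 := by positivity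
      have h4 : (d.factorial : ℝ) ≠ 0 := by positivity
      have h5 : ((d - j).factorial : ℝ) ≠ 0 := by positivity
      field_simp
      rw [pow_two, s2]; ring
    · intro b _ hb
      rw [if_neg (by omega), zero_mul]
    · intro h; simp only [Finset.mem_range] at h; omega
  rw [Finset.sum_congr rfl h2, ← Finset.mul_sum, vand]
  rcases d with _ | d
  · simp [poch]
  · rw [poch_succ' (-x + x)]; simp

/-! Forward difference -/

theorem fpol_diff (u y : ℝ) (j : ℕ) :
    fpol u (j + 1) ((y + 1) * (y + 1 + u)) - fpol u (j + 1) (y * (y + u))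
      = -(2 * y + u + 1) * fpol (u + 1) j (y * (y + (u + 1))) := by
  rw [fpol_fact, fpol_fact, fpol_fact, poch_succ' (-(y + 1)), poch_succ (y + 1 + u), poch_succ (-y),
    poch_succ' (y + u), Nat.factorial_succ]
  rw [show -(y + 1) + 1 = -y by ring, show y + 1 + u = y + (u + 1) by ring,
    show y + u + 1 = y + (u + 1) by ring]
  have h3 : (j.factorial : ℝ) ≠ 0 := by positivity
  push_cast
  field_simp
  ring

theorem ecoef_succ (c N : ℝ) (k j : ℕ) : ecoef c N (k + 1) (j + 1) = - ecoef (c + 1) (N - 1) k j := by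
  unfold ecoef
  by_cases h : j ≤ k
  · rw [if_pos h, if_pos (by omega), Nat.add_sub_add_right]
    rw [show 1 - N + ((j + 1 : ℕ) : ℝ) = 1 - (N - 1) + j by push_cast; ring,
      show c + ((j + 1 : ℕ) : ℝ) = c + 1 + j by push_cast; ring]
    ring
  · rw [if_neg h, if_neg (by omega)]; simp

theorem dualHahn_diff (α c N y : ℝ) (k : ℕ) :
    dualHahn α c N (k + 1) ((y + 1) * (y + 1 + (α + c - N))) - dualHahn α c N (k + 1) (y * (y + (α + c - N)))
      = (2 * y + (α + c - N) + 1) *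
        dualHahn (α - 1) (c + 1) (N - 1) k (y * (y + ((α + c - N) + 1))) := by
  rw [dualHahn_expand α c N (k + 1) (k + 1) le_rfl, dualHahn_expand α c N (k + 1) (k + 1) le_rfl,
    dualHahn_expand _ _ _ k k le_rfl, ← Finset.sum_sub_distrib, Finset.sum_range_succ', Finset.mul_sum]
  have : ecoef c N (k + 1) 0 * fpol (α + c - N) 0 ((y + 1) * (y + 1 + (α + c - N))) -
      ecoef c N (k + 1) 0 * fpol (α + c - N) 0 (y * (y + (α + c - N))) = 0 := by simp [fpol]
  rw [this, add_zero]
  apply Finset.sum_congr rfl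
  intro j _
  rw [← mul_sub, fpol_diff, ecoef_succ, show α - 1 + (c + 1) - (N - 1) = α + c - N + 1 by ring]
  ring

/-- iterated divided differences -/
noncomputable def gfun (α c N x : ℝ) (s k : ℕ) : ℝ :=
  if s ≤ k then dualHahn (α - s) (c + s) (N - s) (k - s) (x * (x + (α + c - N + s))) else 0

theorem gfun_diff (α c N x : ℝ) (s k : ℕ) :
    gfun α c N (x + 1) s k - gfun α c N x s k =
      (2 * x + (α + c - N) + s + 1) * gfun α c N x (s + 1) k := by
  unfold gfun
  by_cases h : s + 1 ≤ k
  · obtain ⟨p, rfl⟩ := Nat.exists_eq_add_of_le h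
    rw [if_pos (by omega), if_pos (by omega), if_pos (by omega),
      show s + 1 + p - s = p + 1 by omega, show s + 1 + p - (s + 1) = p by omega]
    have := dualHahn_diff (α - s) (c + s) (N - s) x p
    rw [show α - s + (c + s) - (N - s) = α + c - N + s by ring] at this
    rw [this]
    push_cast
    rw [show α - s - 1 = α - (s + 1) by ring, show c + s + 1 = c + (s + 1) by ring,
      show N - s - 1 = N - (s + 1) by ring]
    rw [show α + c - N + s + 1 = α + c - N + (s + 1) by ring]
    ring
  · rw [if_neg h]
    by_cases h' : s ≤ k
    · have : k = s := by omega
      subst this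
      simp [dualHahn, fpol]
    · rw [if_neg h', if_neg h']; simp

/-- lower triangular factor -/
noncomputable def Lf (w : ℕ → ℕ → ℝ) : ℕ → ℕ → ℕ → ℝ
  | 0, _, 0 => 1
  | 0, _, _ + 1 => 0
  | i + 1, t, 0 => Lf w i t 0
  | i + 1, t, s + 1 => Lf w i t (s + 1) + w t i * Lf w i (t + 1) s

theorem Lf_zero (w : ℕ → ℕ → ℝ) (i t s : ℕ) (h : i < s) : Lf w i t s = 0 := by
  induction i generalizing t s with
  | zero =>
    obtain ⟨s, rfl⟩ := Nat.exists_eq_succ_of_ne_zero (show s ≠ 0 by omega)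
    simp [Lf]
  | succ i ih =>
    obtain ⟨s, rfl⟩ := Nat.exists_eq_succ_of_ne_zero (show s ≠ 0 by omega)
    simp only [Lf, Nat.succ_eq_add_one]
    rw [ih _ _ (by omega), ih _ _ (by omega)]; simp

theorem Lf_col (w : ℕ → ℕ → ℝ) (i t : ℕ) : Lf w i t 0 = 1 := by
  induction i with
  | zero => simp [Lf]
  | succ i ih => simp [Lf, ih]

theorem Lf_diag (w : ℕ → ℕ → ℝ) (i t : ℕ) : Lf w i t i = ∏ k ∈ Finset.range i, w (t + k) (i - 1 - k) := by
  induction i generalizing t with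
  | zero => simp [Lf]
  | succ i ih =>
    simp only [Lf]
    rw [Lf_zero _ _ _ _ (by omega), ih, Finset.prod_range_succ', zero_add, mul_comm]
    congr 1
    apply Finset.prod_congr rfl
    intro k _
    congr 1 <;> omega

theorem Lf_spec (w F : ℕ → ℕ → ℝ) (hF : ∀ t i, F t (i + 1) = F t i + w t i * F (t + 1) i)
    (n i t : ℕ) (hi : i < n) :
    F t i = ∑ s ∈ Finset.range n, Lf w i t s * F (t + s) 0 := by
  induction i generalizing t n with
  | zero =>
    obtain ⟨n, rfl⟩ := Nat.exists_eq_succ_of_ne_zero (show n ≠ 0 by omega)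
    rw [Finset.sum_range_succ']
    simp [Lf]
  | succ i ih =>
    obtain ⟨n, rfl⟩ := Nat.exists_eq_succ_of_ne_zero (show n ≠ 0 by omega)
    rw [hF, ih (n + 1) t (by omega), ih n (t + 1) (by omega)]
    rw [Finset.sum_range_succ', Nat.succ_eq_add_one, Finset.sum_range_succ' (n := n) (f := fun s => Lf w (i + 1) t s * F (t + s) 0)]
    simp only [Lf, add_mul, Finset.sum_add_distrib, Finset.mul_sum]
    have : ∀ s, t + 1 + s = t + (s + 1) := by intro s; omega
    simp only [this, mul_assoc]
    ring

theorem det_newton (w : ℕ → ℕ → ℝ) (F : ℕ → ℕ → ℕ → ℝ)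
    (hF : ∀ k t i, F k t (i + 1) = F k t i + w t i * F k (t + 1) i) (n : ℕ) :
    Matrix.det (Matrix.of fun i j : Fin n => F j 0 i) =
      (∏ i ∈ Finset.range n, ∏ k ∈ Finset.range i, w k (i - 1 - k)) *
      Matrix.det (Matrix.of fun i j : Fin n => F j i 0) := by
  have h : (Matrix.of fun i j : Fin n => F j 0 i) =
      (Matrix.of fun i s : Fin n => Lf w i 0 s) * (Matrix.of fun i j : Fin n => F j i 0) := by
    ext i j
    rw [Matrix.mul_apply]
    simp only [Matrix.of_apply]
    rw [Lf_spec w (F j) (hF j) n i 0 i.2, Finset.sum_range]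
    simp
  rw [h, Matrix.det_mul]
  congr 1
  rw [Matrix.det_of_isLowerTriangular, Finset.prod_range]
  · apply Finset.prod_congr rfl
    intro i _
    simp only [Matrix.of_apply]
    rw [Lf_diag]; simp
  · intro i j hij
    exact Lf_zero _ _ _ _ (by simpa using hij)

theorem casorati_eq (α c N : ℝ) (n m : ℕ) (x : ℝ)
    (h : ∏ l ∈ Finset.Icc 1 (n - 1), poch (2 * x + α + c - N + l) l ≠ 0) :
    dualHahnCasorati α c N n m x =
      Matrix.det (Matrix.of fun i j : Fin n => gfun α c N x i (m + j)) := by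
  unfold dualHahnCasorati
  rw [div_eq_iff h]
  have key := det_newton (fun t i => 2 * (x + i) + (α + c - N) + t + 1)
    (fun k t i => gfun α c N (x + i) t (m + k)) (by
      intro k t i
      have := gfun_diff α c N (x + i) t (m + k)
      rw [← this]; push_cast
      rw [show x + ((i : ℝ) + 1) = x + i + 1 by ring]; ring) n
  have e1 : (Matrix.of fun i j : Fin n => dualHahn α c N (m + (j : ℕ)) ((x + (i : ℕ)) * (x + (i : ℕ) + α + c - N)))
      = Matrix.of fun i j : Fin n => gfun α c N (x + (i : ℕ)) 0 (m + (j : ℕ)) := by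
    ext i j
    simp only [Matrix.of_apply, gfun]
    simp only [zero_le, if_true, Nat.cast_zero, sub_zero, add_zero, Nat.sub_zero]
    congr 2; ring
  rw [e1, key, mul_comm]
  simp only [Nat.cast_zero, add_zero]
  congr 1
  have e2 : ∀ i ∈ Finset.range n, ∏ k ∈ Finset.range i, (2 * (x + ((i - 1 - k : ℕ) : ℝ)) + (α + c - N) + k + 1)
      = poch (2 * x + α + c - N + i) i := by
    intro i _
    unfold poch
    rw [← Finset.prod_range_reflect]
    apply Finset.prod_congr rfl
    intro k hk
    simp only [Finset.mem_range] at hk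
    rw [show i - 1 - (i - 1 - k) = k by omega, show ((i - 1 - k : ℕ) : ℝ) = i - 1 - k by
      rw [Nat.cast_sub (by omega), Nat.cast_sub (by omega)]; simp]
    ring
  rw [Finset.prod_congr rfl e2]
  symm
  apply Finset.prod_subset
  · intro a; simp only [Finset.mem_Icc, Finset.mem_range]; omega
  · intro a ha hb
    simp only [Finset.mem_Icc, Finset.mem_range] at ha hb
    have : a = 0 := by omega
    subst this; simp [poch]

/-! Complementary minors -/

theorem det_block (X : ℕ → ℕ → ℝ) (p q M : ℕ) (hM : M = p + q)
    (hX : ∀ i j, i < M → j < M → p ≤ j → X i j = if i = j then 1 else 0) :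
    Matrix.det (Matrix.of fun i j : Fin M => X i j) = Matrix.det (Matrix.of fun i j : Fin p => X i j) := by
  subst hM
  rw [← Matrix.det_submatrix_equiv_self finSumFinEquiv]
  have : (Matrix.of fun i j : Fin (p + q) => X i j).submatrix finSumFinEquiv finSumFinEquiv
      = Matrix.fromBlocks (Matrix.of fun i j : Fin p => X i j) 0
        (Matrix.of fun (i : Fin q) (j : Fin p) => X (p + i) j) 1 := by
    ext i j
    rcases i with i | i <;> rcases j with j | j
    · simp
    · simp
      rw [hX _ _ (by omega) (by omega) (by omega), if_neg (by omega)]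
    · simp
    · simp
      rw [hX _ _ (by omega) (by omega) (by omega), Matrix.one_apply]
      simp [Fin.ext_iff]
  rw [this, Matrix.det_fromBlocks_zero₁₂, Matrix.det_one, mul_one]

theorem rot_val (M m : ℕ) (j : Fin (M + 1)) : (((finRotate (M + 1)) ^ m) j : ℕ) = (j + m) % (M + 1) := by
  induction m with
  | zero => simp [Nat.mod_eq_of_lt j.2]
  | succ m ih =>
    rw [pow_succ', Equiv.Perm.mul_apply, finRotate_succ_apply, Fin.val_add, ih]
    simp [← add_assoc]

theorem compl_minor (A B : ℕ → ℕ → ℝ) (n m M : ℕ) (hM : M + 1 = n + m)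
    (hA : ∀ i j, j < i → A i j = 0) (hA1 : ∀ i, A i i = 1)
    (hAB : ∀ i l, i < M + 1 → l < M + 1 →
      ∑ k ∈ Finset.range (M + 1), A i k * B k l = if i = l then 1 else 0) :
    Matrix.det (Matrix.of fun i j : Fin n => A i (m + j)) =
      (-1) ^ (n * m) * Matrix.det (Matrix.of fun i j : Fin m => B i (n + j)) := by
  let C : ℕ → ℕ → ℝ := fun k l => if l < m then B k (n + l) else if k = l then 1 else 0
  let D : ℕ → ℕ → ℝ := fun i l => if l < m then (if i = n + l then 1 else 0) else A i l
  have hC : Matrix.det (Matrix.of fun i j : Fin (M + 1) => C i j) =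
      Matrix.det (Matrix.of fun i j : Fin m => B i (n + j)) := by
    rw [det_block C m n (M + 1) (by omega)]
    · congr 1; ext i j; simp [C]
    · intro i j _ _ h
      simp only [C]; rw [if_neg (by omega)]
  have hdA : Matrix.det (Matrix.of fun i j : Fin (M + 1) => A i j) = 1 := by
    rw [Matrix.det_of_isUpperTriangular]
    · simp [hA1]
    · intro i j hij
      exact hA _ _ (by simpa using hij)
  have hD : (Matrix.of fun i j : Fin (M + 1) => A i j) * (Matrix.of fun i j : Fin (M + 1) => C i j)
      = Matrix.of fun i j : Fin (M + 1) => D i j := by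
    ext i j
    rw [Matrix.mul_apply]
    simp only [Matrix.of_apply]
    rw [← Finset.sum_range (fun k => A i k * C k j)]
    simp only [C, D]
    by_cases hj : (j : ℕ) < m
    · simp only [if_pos hj]
      exact hAB _ _ i.2 (by omega)
    · simp only [if_neg hj]
      rw [Finset.sum_eq_single (j : ℕ)]
      · simp
      · intro b _ hb; simp [hb]
      · intro h; exact absurd (Finset.mem_range.2 j.2) h
  have hdet : Matrix.det (Matrix.of fun i j : Fin (M + 1) => D i j)
      = Matrix.det (Matrix.of fun i j : Fin m => B i (n + j)) := by
    rw [← hD, Matrix.det_mul, hdA, hC, one_mul]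
  have hrot := Matrix.det_permute' ((finRotate (M + 1)) ^ m) (Matrix.of fun i j : Fin (M + 1) => D i j)
  have hs : (((Equiv.Perm.sign ((finRotate (M + 1)) ^ m) : ℤˣ) : ℤ) : ℝ) = (-1) ^ (n * m) := by
    rw [map_pow, sign_finRotate]
    push_cast
    rw [← pow_mul]
    rcases m with _ | m
    · simp
    · have : M = n + m := by omega
      subst this
      rw [add_mul, pow_add, (Nat.even_mul_succ_self m).neg_one_pow, mul_one]
  rw [hs, hdet] at hrot
  rw [← hrot]
  let E : ℕ → ℕ → ℝ := fun i j => D i ((j + m) % (M + 1))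
  have hE : (Matrix.of fun i j : Fin (M + 1) => D i j).submatrix id ((finRotate (M + 1)) ^ m)
     = Matrix.of fun i j : Fin (M + 1) => E i j := by
    ext i j
    simp only [Matrix.submatrix_apply, Matrix.of_apply, E, id, rot_val]
  rw [hE, det_block E n m (M + 1) hM]
  · congr 1
    ext i j
    simp only [Matrix.of_apply, E, D]
    rw [Nat.mod_eq_of_lt (by omega), if_neg (by omega), add_comm]
  · intro i j hi hj hnj
    simp only [E, D]
    have : (j + m) % (M + 1) = j - n := by
      rw [show j + m = (j - n) + (M + 1) by omega, Nat.add_mod_right, Nat.mod_eq_of_lt (by omega)]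
    rw [this, if_pos (by omega), show n + (j - n) = j by omega]

theorem dualHahn_zero (α c N X : ℝ) : dualHahn α c N 0 X = 1 := by simp [dualHahn, poch, fpol]

theorem AB_one (α c N x : ℝ) (M i l : ℕ) (hi : i < M + 1) (hl : l < M + 1) :
    ∑ k ∈ Finset.range (M + 1), gfun (α + (M + 1 : ℕ)) (c - (M + 1 : ℕ)) (N + (M + 1 : ℕ)) x i k *
      ((-1) ^ k * (-1) ^ l * gfun (-α) (2 - c) (-N) (-x) (M - l) (M - k)) = if i = l then 1 else 0 := by
  by_cases hil : i ≤ l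
  · obtain ⟨d, rfl⟩ := Nat.exists_eq_add_of_le hil
    have h1 : ∑ k ∈ Finset.range (M + 1), gfun (α + (M + 1 : ℕ)) (c - (M + 1 : ℕ)) (N + (M + 1 : ℕ)) x i k *
      ((-1) ^ k * (-1) ^ (i + d) * gfun (-α) (2 - c) (-N) (-x) (M - (i + d)) (M - k))
      = ∑ p ∈ Finset.range (d + 1), gfun (α + (M + 1 : ℕ)) (c - (M + 1 : ℕ)) (N + (M + 1 : ℕ)) x i (i + p) *
      ((-1) ^ (i + p) * (-1) ^ (i + d) * gfun (-α) (2 - c) (-N) (-x) (M - (i + d)) (M - (i + p))) := by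
      symm
      rw [← Finset.sum_image (s := Finset.range (d + 1)) (g := fun p => i + p)
        (f := fun k => gfun (α + (M + 1 : ℕ)) (c - (M + 1 : ℕ)) (N + (M + 1 : ℕ)) x i k *
      ((-1) ^ k * (-1) ^ (i + d) * gfun (-α) (2 - c) (-N) (-x) (M - (i + d)) (M - k)))
        (by intro a _ b _ h; simpa using h)]
      apply Finset.sum_subset
      · intro a
        simp only [Finset.mem_image, Finset.mem_range]
        rintro ⟨b, hb, rfl⟩; omega
      · intro a ha hb
        simp only [Finset.mem_image, Finset.mem_range, not_exists, not_and] at ha hb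
        by_cases hja : i ≤ a
        · have : ¬ (M - (i + d) ≤ M - a) := by
            intro h
            exact hb (a - i) (by omega) (by omega)
          rw [gfun.eq_def (-α), if_neg this, mul_zero, mul_zero]
        · rw [gfun, if_neg hja]; simp
    rw [h1]
    have h2 := core (α + (M + 1 : ℕ) - i) (c - (M + 1 : ℕ) + i) (N + (M + 1 : ℕ) - i) x d
    have h3 : ∀ p ∈ Finset.range (d + 1), gfun (α + (M + 1 : ℕ)) (c - (M + 1 : ℕ)) (N + (M + 1 : ℕ)) x i (i + p) *
      ((-1) ^ (i + p) * (-1) ^ (i + d) * gfun (-α) (2 - c) (-N) (-x) (M - (i + d)) (M - (i + p)))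
      = (-1) ^ d * ((-1 : ℝ) ^ p * dualHahn (α + (M + 1 : ℕ) - i) (c - (M + 1 : ℕ) + i) (N + (M + 1 : ℕ) - i) p (x * (x + ((α + (M + 1 : ℕ) - i) + (c - (M + 1 : ℕ) + i) - (N + (M + 1 : ℕ) - i)))) *
      dualHahn (1 + d - (α + (M + 1 : ℕ) - i)) (1 - (c - (M + 1 : ℕ) + i) - d) (1 + d - (N + (M + 1 : ℕ) - i)) (d - p) (-x * (-x + (1 - d - ((α + (M + 1 : ℕ) - i) + (c - (M + 1 : ℕ) + i) - (N + (M + 1 : ℕ) - i)))))) := by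
      intro p hp
      simp only [Finset.mem_range] at hp
      rw [gfun, gfun, if_pos (by omega), if_pos (by omega), Nat.add_sub_cancel_left,
        show M - (i + p) - (M - (i + d)) = d - p by omega, Nat.cast_sub (show i + d ≤ M by omega)]
      push_cast
      have s1 : ((-1 : ℝ) ^ i) * (-1) ^ i = 1 := by rw [← mul_pow]; simp
      rw [show α + ((M : ℝ) + 1) + (c - (M + 1)) - (N + (M + 1)) + i = α + (M + 1) - i + (c - (M + 1) + i) - (N + (M + 1) - i) by ring]
      rw [show -α - ((M : ℝ) - (i + d)) = 1 + d - (α + (M + 1) - i) by ring,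
        show 2 - c + ((M : ℝ) - (i + d)) = 1 - (c - (M + 1) + i) - d by ring,
        show -N - ((M : ℝ) - (i + d)) = 1 + d - (N + (M + 1) - i) by ring,
        show -α + (2 - c) - -N + ((M : ℝ) - (i + d)) = 1 - d - (α + (M + 1) - i + (c - (M + 1) + i) - (N + (M + 1) - i)) by ring]
      rw [pow_add, pow_add]
      linear_combination ((-1 : ℝ) ^ p * (-1) ^ d * dualHahn (α + (M + 1) - i) (c - (M + 1) + i) (N + (M + 1) - i) p (x * (x + ((α + (M + 1) - i) + (c - (M + 1) + i) - (N + (M + 1) - i)))) *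
      dualHahn (1 + d - (α + (M + 1) - i)) (1 - (c - (M + 1) + i) - d) (1 + d - (N + (M + 1) - i)) (d - p) (-x * (-x + (1 - d - ((α + (M + 1) - i) + (c - (M + 1) + i) - (N + (M + 1) - i)))))) * s1
    rw [Finset.sum_congr rfl h3, ← Finset.mul_sum, h2]
    by_cases hd : d = 0
    · subst hd; simp
    · rw [if_neg hd, if_neg (by omega), mul_zero]
  · rw [if_neg (by omega)]
    apply Finset.sum_eq_zero
    intro k hk
    simp only [Finset.mem_range] at hk
    by_cases hja : i ≤ k
    · rw [gfun.eq_def (-α), if_neg (by omega), mul_zero, mul_zero]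
    · rw [gfun, if_neg hja]; simp

theorem sign_det (n m : ℕ) (b : ℕ → ℕ → ℝ) :
    Matrix.det (Matrix.of fun k l : Fin m => (-1 : ℝ) ^ (k : ℕ) * (-1) ^ (n + (l : ℕ)) * b k l)
    = (-1) ^ (n * m) * Matrix.det (Matrix.of fun k l : Fin m => b k l) := by
  have h1 := Matrix.det_mul_column (fun k : Fin m => (-1 : ℝ) ^ (k : ℕ)) (Matrix.of fun k l : Fin m => (-1) ^ (n + (l : ℕ)) * b k l)
  have h2 := Matrix.det_mul_row (fun l : Fin m => (-1 : ℝ) ^ (n + (l : ℕ))) (Matrix.of fun k l : Fin m => b k l)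
  simp only [Matrix.of_apply] at h1 h2
  simp only [mul_assoc]
  rw [h1, h2, ← mul_assoc]
  congr 1
  simp only [pow_add, Finset.prod_mul_distrib]
  rw [mul_left_comm, ← Finset.prod_mul_distrib]
  simp [← mul_pow, ← pow_mul]

/-- the symmetry of normalized Casorati determinants of dual
Hahn polynomials. -/
theorem dualHahn_casorati_symmetry (n m : ℕ) (x α c N : ℝ)
    (h1 : (∏ l ∈ Finset.Icc 1 (n - 1),
      poch (2 * x + α + c - N - n - m + l) l) ≠ 0)
    (h2 : (∏ l ∈ Finset.Icc 1 (m - 1),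
      poch (-(2 * x) + 2 - (α + c - N) + l) l) ≠ 0) :
    dualHahnCasorati (α + n + m) (c - n - m) (N + n + m) n m x
    = dualHahnCasorati (-α) (2 - c) (-N) m n (-x) := by
  rw [casorati_eq, casorati_eq]
  rotate_left
  · convert h2 using 4; ring
  · convert h1 using 4; ring
  rcases Nat.eq_zero_or_pos (n + m) with h0 | h0
  · obtain ⟨rfl, rfl⟩ : n = 0 ∧ m = 0 := by omega
    simp
  obtain ⟨M, hM⟩ := Nat.exists_eq_succ_of_ne_zero h0.ne'
  have hMr : ((M + 1 : ℕ) : ℝ) = n + m := by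
    rw [← Nat.succ_eq_add_one, ← hM]; push_cast; ring
  have e := compl_minor (gfun (α + (M + 1 : ℕ)) (c - (M + 1 : ℕ)) (N + (M + 1 : ℕ)) x)
    (fun k l => (-1) ^ k * (-1) ^ l * gfun (-α) (2 - c) (-N) (-x) (M - l) (M - k)) n m M hM.symm
    (by intro i j h; rw [gfun, if_neg (by omega)])
    (by intro i; rw [gfun, if_pos le_rfl, Nat.sub_self, dualHahn_zero])
    (AB_one α c N x M · ·)
  rw [hMr, sign_det n m (fun k l => gfun (-α) (2 - c) (-N) (-x) (M - (n + l)) (M - k)), ← mul_assoc,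
    ← mul_pow] at e
  rw [show α + n + m = α + (n + m) by ring, show c - n - m = c - (n + m) by ring,
    show N + n + m = N + (n + m) by ring, e]
  norm_num
  rw [← Matrix.det_transpose, ← Matrix.det_submatrix_equiv_self Fin.revPerm]
  congr 1
  ext i j
  simp only [Matrix.submatrix_apply, Matrix.transpose_apply, Matrix.of_apply, Fin.revPerm_apply, Fin.val_rev]
  congr 1 <;> omega
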